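/- For every integer k ≥ 1 and every real r > 0 there exist a real β > 0 and an integer n₀ such that for all n ≥ n₀, setting m = ⌊rn⌋: (2n)^(km) · T(n,m) > (1 + β)^n · P(n,m)², where T(n,m) is the number of triples (σ, τ, F) with σ, τ : {1,…,n} → {0,1} assignments and F a sequence of m ordered k-clauses on n variables such that both σ and τ satisfy every clause of F, and P(n,m) is the number of pairs (σ, F) such that σ satisfies every clause of F. (Equivalently, in the i.i.d. clause model the second moment of the number of satisfying assignments exceeds (1+β)^n times the square of the first moment.) -/

import Mathlib

open Finset in
theorem nsm_lits (n : ℕ) (σ τ : Fin n → Bool) :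
    #{l : Fin n × Bool | σ l.1 ≠ l.2 ∧ τ l.1 ≠ l.2} = #{v : Fin n | σ v = τ v} := by
  rw [Finset.card_filter, Finset.card_filter, Fintype.sum_prod_type]
  refine Finset.sum_congr rfl fun v _ => ?_
  cases h1 : σ v <;> cases h2 : τ v <;> simp [h1, h2]

open Finset in
theorem nsm_unsat (n k : ℕ) (σ τ : Fin n → Bool) :
    #{C : Fin k → Fin n × Bool | (∀ j, σ (C j).1 ≠ (C j).2) ∧ ∀ j, τ (C j).1 ≠ (C j).2}
      = #{v : Fin n | σ v = τ v} ^ k := by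
  rw [← nsm_lits]
  have : ({C : Fin k → Fin n × Bool | (∀ j, σ (C j).1 ≠ (C j).2) ∧ ∀ j, τ (C j).1 ≠ (C j).2} :
      Finset _) = Fintype.piFinset
        (fun _ : Fin k => ({l : Fin n × Bool | σ l.1 ≠ l.2 ∧ τ l.1 ≠ l.2} : Finset _)) := by
    ext C
    simp only [Finset.mem_filter, Finset.mem_univ, true_and, Fintype.mem_piFinset]
    exact forall_and.symm
  rw [this, Fintype.card_piFinset]
  simp

open Finset in
theorem nsm_unsat1 (n k : ℕ) (σ : Fin n → Bool) :
    #{C : Fin k → Fin n × Bool | ∀ j, σ (C j).1 ≠ (C j).2} = n ^ k := by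
  have := nsm_unsat n k σ σ
  simpa using this

open Finset in
theorem nsm_sat (n k : ℕ) (σ τ : Fin n → Bool) :
    (#{C : Fin k → Fin n × Bool | (∃ j, σ (C j).1 = (C j).2) ∧ ∃ j, τ (C j).1 = (C j).2} : ℝ)
      = (2 * (n : ℝ)) ^ k - 2 * (n : ℝ) ^ k + (#{v : Fin n | σ v = τ v} : ℝ) ^ k := by
  classical
  have e : ({C : Fin k → Fin n × Bool | (∃ j, σ (C j).1 = (C j).2) ∧ ∃ j, τ (C j).1 = (C j).2} :
      Finset _) = (({C : Fin k → Fin n × Bool | ∀ j, σ (C j).1 ≠ (C j).2} : Finset _) ∪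
        ({C : Fin k → Fin n × Bool | ∀ j, τ (C j).1 ≠ (C j).2} : Finset _))ᶜ := by
    ext C
    simp
  have h1 := Finset.card_add_card_compl
    (({C : Fin k → Fin n × Bool | ∀ j, σ (C j).1 ≠ (C j).2} : Finset _) ∪
        ({C : Fin k → Fin n × Bool | ∀ j, τ (C j).1 ≠ (C j).2} : Finset _))
  have h2 := Finset.card_union_add_card_inter
    ({C : Fin k → Fin n × Bool | ∀ j, σ (C j).1 ≠ (C j).2} : Finset _)
    ({C : Fin k → Fin n × Bool | ∀ j, τ (C j).1 ≠ (C j).2} : Finset _)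
  rw [← Finset.filter_and, nsm_unsat, nsm_unsat1, nsm_unsat1] at h2
  rw [← e] at h1
  have h3 : Fintype.card (Fin k → Fin n × Bool) = (2 * n) ^ k := by
    simp [mul_comm]
  rw [h3] at h1
  have h1' := congrArg (Nat.cast : ℕ → ℝ) h1
  have h2' := congrArg (Nat.cast : ℕ → ℝ) h2
  push_cast at h1' h2'
  linarith

open Finset in
theorem nsm_T (n k m : ℕ) :
    (Nat.card {p : ((Fin n → Bool) × (Fin n → Bool)) × (Fin m → Fin k → Fin n × Bool) //
              (∀ i, ∃ j, p.1.1 (p.2 i j).1 = (p.2 i j).2) ∧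
              (∀ i, ∃ j, p.1.2 (p.2 i j).1 = (p.2 i j).2)} : ℝ) =
    ∑ σ : Fin n → Bool, ∑ τ : Fin n → Bool,
      ((2 * (n : ℝ)) ^ k - 2 * (n : ℝ) ^ k + (#{v : Fin n | σ v = τ v} : ℝ) ^ k) ^ m := by
  classical
  rw [Nat.card_eq_fintype_card, Fintype.card_subtype, Finset.card_filter, Fintype.sum_prod_type,
    Fintype.sum_prod_type, Nat.cast_sum]
  refine Finset.sum_congr rfl fun σ _ => ?_
  rw [Nat.cast_sum]
  refine Finset.sum_congr rfl fun τ _ => ?_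
  rw [← nsm_sat, ← Finset.card_filter, ← Nat.cast_pow]
  congr 1
  have : ({F : Fin m → Fin k → Fin n × Bool | (∀ i, ∃ j, σ (F i j).1 = (F i j).2) ∧
      (∀ i, ∃ j, τ (F i j).1 = (F i j).2)} : Finset _) = Fintype.piFinset (fun _ : Fin m =>
      ({C : Fin k → Fin n × Bool | (∃ j, σ (C j).1 = (C j).2) ∧ ∃ j, τ (C j).1 = (C j).2} : Finset _)) := by
    ext F
    simp only [Finset.mem_filter, Finset.mem_univ, true_and, Fintype.mem_piFinset]
    exact forall_and.symm
  rw [this, Fintype.card_piFinset]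
  simp

open Finset in
theorem nsm_P (n k m : ℕ) :
    (Nat.card {p : (Fin n → Bool) × (Fin m → Fin k → Fin n × Bool) //
              ∀ i, ∃ j, p.1 (p.2 i j).1 = (p.2 i j).2} : ℝ) =
    2 ^ n * ((2 * (n : ℝ)) ^ k - (n : ℝ) ^ k) ^ m := by
  classical
  rw [Nat.card_eq_fintype_card, Fintype.card_subtype, Finset.card_filter, Fintype.sum_prod_type,
    Nat.cast_sum]
  have : ∀ σ : Fin n → Bool, ((∑ F : Fin m → Fin k → Fin n × Bool,
      if ∀ i, ∃ j, σ (F i j).1 = (F i j).2 then 1 else 0 : ℕ) : ℝ) =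
      ((2 * (n : ℝ)) ^ k - (n : ℝ) ^ k) ^ m := by
    intro σ
    have h := nsm_sat n k σ σ
    simp only [and_self, Finset.filter_true, Finset.card_univ, Fintype.card_fin] at h
    have h' : (2 * (n : ℝ)) ^ k - (n : ℝ) ^ k =
      (2 * (n : ℝ)) ^ k - 2 * (n : ℝ) ^ k + (n : ℝ) ^ k := by ring
    rw [h', ← h, ← Finset.card_filter, ← Nat.cast_pow]
    congr 1
    have : ({F : Fin m → Fin k → Fin n × Bool | ∀ i, ∃ j, σ (F i j).1 = (F i j).2} : Finset _)
      = Fintype.piFinset (fun _ : Fin m =>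
      ({C : Fin k → Fin n × Bool | ∃ j, σ (C j).1 = (C j).2} : Finset _)) := by
      ext F
      simp only [Finset.mem_filter, Finset.mem_univ, true_and, Fintype.mem_piFinset]
    rw [this, Fintype.card_piFinset]
    simp
  rw [Finset.sum_congr rfl fun σ _ => this σ]
  simp

/-- pointwise bound -/
theorem nsm_point (n k m : ℕ) (hk : 1 ≤ k) (hn : 1 ≤ n) (A : ℝ) (hA : 0 ≤ A) (hAn : A ≤ n)
    (c : ℝ) (hc : c = 1 / ((2 : ℝ) ^ k - 1) ^ 2) :
    (((2 * (n : ℝ)) ^ k - (n : ℝ) ^ k) ^ m) ^ 2 *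
      (Real.exp (Real.log (1 + c) * m / n * (2 * A - n)) - 1) ≤
    (2 * (n : ℝ)) ^ (k * m) * ((2 * (n : ℝ)) ^ k - 2 * (n : ℝ) ^ k + A ^ k) ^ m := by
  have hn0 : (0 : ℝ) < n := by exact_mod_cast hn
  have hK : (2 : ℝ) ≤ 2 ^ k := le_self_pow₀ (by norm_num) (by omega)
  have hK0 : (0 : ℝ) < ((2 : ℝ) ^ k - 1) ^ 2 := by
    have : (0 : ℝ) < 2 ^ k - 1 := by linarith
    positivity
  have hc0 : 0 < c := by rw [hc]; positivity
  have hL : 0 ≤ Real.log (1 + c) := Real.log_nonneg (by linarith)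
  have hM : (0 : ℝ) < (n : ℝ) ^ k := by positivity
  have hg : 0 ≤ (2 * (n : ℝ)) ^ k - 2 * (n : ℝ) ^ k + A ^ k := by
    rw [mul_pow]
    have : 0 ≤ A ^ k := by positivity
    nlinarith
  have hR : 0 ≤ (2 * (n : ℝ)) ^ (k * m) * ((2 * (n : ℝ)) ^ k - 2 * (n : ℝ) ^ k + A ^ k) ^ m := by
    positivity
  by_cases hx : 2 * A - n < 0
  · refine le_trans (mul_nonpos_of_nonneg_of_nonpos (by positivity) ?_) hR
    rw [sub_nonpos, Real.exp_le_one_iff]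
    exact mul_nonpos_of_nonneg_of_nonpos (by positivity) hx.le
  push Not at hx
  obtain ⟨x, hxdef⟩ : ∃ x, x = (2 * A - n) / n := ⟨_, rfl⟩
  have hx0 : 0 ≤ x := by rw [hxdef]; positivity
  have hx1 : x ≤ 1 := by rw [hxdef, div_le_one hn0]; linarith
  have hAx : A = n * ((1 + x) / 2) := by rw [hxdef]; field_simp; ring
  have hb : 1 + x ≤ (1 + x) ^ k := le_self_pow₀ (by linarith) (by omega)
  have hexp : Real.exp (Real.log (1 + c) * m / n * (2 * A - n)) = ((1 + c) ^ x) ^ m := by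
    rw [Real.rpow_def_of_pos (by linarith), ← Real.exp_nat_mul, hxdef]
    congr 1
    ring
  have hbern : (1 + c) ^ x ≤ 1 + x * c :=
    rpow_one_add_le_one_add_mul_self (by linarith) hx0 hx1
  have key : ((2 * (n : ℝ)) ^ k - (n : ℝ) ^ k) ^ 2 * (1 + c) ^ x ≤
      (2 * (n : ℝ)) ^ k * ((2 * (n : ℝ)) ^ k - 2 * (n : ℝ) ^ k + A ^ k) := by
    calc ((2 * (n : ℝ)) ^ k - (n : ℝ) ^ k) ^ 2 * (1 + c) ^ x
        ≤ ((2 * (n : ℝ)) ^ k - (n : ℝ) ^ k) ^ 2 * (1 + x * c) := by gcongr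
      _ = ((n : ℝ) ^ k) ^ 2 * ((2 ^ k - 1) ^ 2 + x) := by
          have : ((2 : ℝ) ^ k - 1) ^ 2 * c = 1 := by
            rw [hc]; exact mul_one_div_cancel hK0.ne'
          rw [mul_pow]
          linear_combination ((n : ℝ) ^ k) ^ 2 * x * this
      _ ≤ ((n : ℝ) ^ k) ^ 2 * ((2 ^ k - 1) ^ 2 - 1 + (1 + x) ^ k) := by
          exact mul_le_mul_of_nonneg_left (by linarith) (by positivity)
      _ = _ := by
          rw [hAx, mul_pow, mul_pow, div_pow]
          field_simp
          ring
  calc _ ≤ (((2 * (n : ℝ)) ^ k - (n : ℝ) ^ k) ^ m) ^ 2 *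
      (Real.exp (Real.log (1 + c) * m / n * (2 * A - n))) := by gcongr; linarith
    _ = (((2 * (n : ℝ)) ^ k - (n : ℝ) ^ k) ^ 2 * (1 + c) ^ x) ^ m := by
      rw [hexp, mul_pow _ ((1 + c) ^ x), ← pow_mul, ← pow_mul, mul_comm m 2]
    _ ≤ ((2 * (n : ℝ)) ^ k * ((2 * (n : ℝ)) ^ k - 2 * (n : ℝ) ^ k + A ^ k)) ^ m := by
      gcongr
    _ = _ := by rw [mul_pow, ← pow_mul]

open Finset in
theorem nsm_cosh (n : ℕ) (t : ℝ) (σ : Fin n → Bool) :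
    ∑ τ : Fin n → Bool, Real.exp (t * (2 * (#{v : Fin n | σ v = τ v} : ℝ) - n)) =
      (2 * Real.cosh t) ^ n := by
  have h : ∀ τ : Fin n → Bool, Real.exp (t * (2 * (#{v : Fin n | σ v = τ v} : ℝ) - n)) =
      ∏ v, Real.exp (if σ v = τ v then t else -t) := by
    intro τ
    rw [← Real.exp_sum]
    congr 1
    have : ∀ v, (if σ v = τ v then t else -t) = t * (2 * (if σ v = τ v then 1 else 0) - 1) := by
      intro v; split_ifs <;> ring
    simp_rw [this]
    rw [← Finset.mul_sum, Finset.sum_sub_distrib, ← Finset.mul_sum, Finset.card_filter]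
    push_cast
    simp
  simp_rw [h]
  have h2 := Finset.prod_univ_sum (fun _ : Fin n => (Finset.univ : Finset Bool))
    (fun v b => Real.exp (if σ v = b then t else -t))
  rw [Fintype.piFinset_univ] at h2
  rw [← h2]
  have h3 : ∀ v, ∑ b : Bool, Real.exp (if σ v = b then t else -t) = 2 * Real.cosh t := by
    intro v
    rw [Real.cosh_eq]
    cases σ v <;> simp <;> ring
  rw [Finset.prod_congr rfl fun v _ => h3 v]
  simp


/-- Failure of the naive second moment for random `k`-SAT: for every `k ≥ 1` and
`r > 0` there exist `β > 0` and `n₀` such that for all `n ≥ n₀`, with `m = ⌊rn⌋`,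
`(2n)^(km) · T(n,m) > (1+β)^n · P(n,m)²`, where `T` counts triples `(σ, τ, F)` with
both assignments satisfying the clause sequence `F`, and `P` counts pairs `(σ, F)`
with `σ` satisfying `F`. -/
theorem naive_second_moment_fails (k : ℕ) (hk : 1 ≤ k) (r : ℝ) (hr : 0 < r) :
    ∃ β : ℝ, 0 < β ∧ ∃ n₀ : ℕ, ∀ n : ℕ, n₀ ≤ n →
      (2 * (n : ℝ)) ^ (k * ⌊r * (n : ℝ)⌋₊) *
          (Nat.card {p : ((Fin n → Bool) × (Fin n → Bool)) ×
              (Fin ⌊r * (n : ℝ)⌋₊ → Fin k → Fin n × Bool) //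
              (∀ i, ∃ j, p.1.1 (p.2 i j).1 = (p.2 i j).2) ∧
              (∀ i, ∃ j, p.1.2 (p.2 i j).1 = (p.2 i j).2)} : ℝ) >
        (1 + β) ^ n *
          (Nat.card {p : (Fin n → Bool) × (Fin ⌊r * (n : ℝ)⌋₊ → Fin k → Fin n × Bool) //
              ∀ i, ∃ j, p.1 (p.2 i j).1 = (p.2 i j).2} : ℝ) ^ 2 := by
  classical
  obtain ⟨c, hc⟩ : ∃ c : ℝ, c = 1 / ((2 : ℝ) ^ k - 1) ^ 2 := ⟨_, rfl⟩
  have hK : (2 : ℝ) ≤ 2 ^ k := le_self_pow₀ (by norm_num) (by omega)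
  have hK1 : (0 : ℝ) < 2 ^ k - 1 := by linarith
  have hc0 : 0 < c := by rw [hc]; positivity
  have hL : 0 < Real.log (1 + c) := Real.log_pos (by linarith)
  obtain ⟨b, hb⟩ : ∃ b : ℝ, b = Real.cosh (Real.log (1 + c) * (r / 2)) := ⟨_, rfl⟩
  have hb1 : 1 < b := by rw [hb, Real.one_lt_cosh]; positivity
  have hy1 : 1 < Real.sqrt b := by rw [Real.lt_sqrt (by norm_num)]; simpa using hb1
  have hyy : Real.sqrt b ^ 2 = b := Real.sq_sqrt (by linarith)
  obtain ⟨N1, hN1⟩ := pow_unbounded_of_one_lt 2 hy1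
  refine ⟨Real.sqrt b - 1, by linarith, max (max N1 1) ⌈2 / r⌉₊, fun n hn => ?_⟩
  have hn1 : N1 ≤ n := by omega
  have hn2 : 1 ≤ n := by omega
  have hn3 : 2 / r ≤ n := (Nat.le_ceil _).trans (by exact_mod_cast (by omega : ⌈2 / r⌉₊ ≤ n))
  have hn0 : (0 : ℝ) < n := by exact_mod_cast hn2
  have hrn : 2 ≤ r * n := by rw [div_le_iff₀ hr] at hn3; linarith
  have hm : r * n / 2 ≤ (⌊r * (n : ℝ)⌋₊ : ℝ) := by
    have := Nat.sub_one_lt_floor (r * (n : ℝ)); linarith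
  generalize ⌊r * (n : ℝ)⌋₊ = m at hm ⊢
  rw [nsm_T, nsm_P]
  obtain ⟨t, ht⟩ : ∃ t : ℝ, t = Real.log (1 + c) * m / n := ⟨_, rfl⟩
  have htb : b ≤ Real.cosh t := by
    rw [hb, Real.cosh_le_cosh, abs_of_nonneg (by positivity), abs_of_nonneg (by rw [ht]; positivity),
      ht, mul_div_assoc]
    refine mul_le_mul_of_nonneg_left ?_ hL.le
    rw [le_div_iff₀ hn0]; linarith
  obtain ⟨Q, hQ⟩ : ∃ Q : ℝ, Q = ((2 * (n : ℝ)) ^ k - (n : ℝ) ^ k) ^ m := ⟨_, rfl⟩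
  have hQ0 : 0 < Q := by
    have : (0 : ℝ) < (2 * (n : ℝ)) ^ k - (n : ℝ) ^ k := by
      have hM : (0 : ℝ) < (n : ℝ) ^ k := by positivity
      rw [mul_pow]; nlinarith
    rw [hQ]; positivity
  have hlow : Q ^ 2 * (2 ^ n * ((2 * Real.cosh t) ^ n - 2 ^ n)) ≤ (2 * (n : ℝ)) ^ (k * m) *
      ∑ σ : Fin n → Bool, ∑ τ : Fin n → Bool,
      ((2 * (n : ℝ)) ^ k - 2 * (n : ℝ) ^ k +
        ((Finset.univ.filter fun v : Fin n => σ v = τ v).card : ℝ) ^ k) ^ m := by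
    have e : Q ^ 2 * (2 ^ n * ((2 * Real.cosh t) ^ n - 2 ^ n)) =
        ∑ σ : Fin n → Bool, ∑ τ : Fin n → Bool, Q ^ 2 *
        (Real.exp (t * (2 * ((Finset.univ.filter fun v : Fin n => σ v = τ v).card : ℝ) - n)) - 1) := by
      simp_rw [← Finset.mul_sum, Finset.sum_sub_distrib]
      rw [Finset.sum_congr rfl fun σ _ => nsm_cosh n t σ]
      simp only [Finset.sum_const, Finset.card_univ, Fintype.card_fun, Fintype.card_bool,
        Fintype.card_fin, nsmul_eq_mul, Nat.cast_pow, Nat.cast_ofNat]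
      ring
    rw [e, Finset.mul_sum]
    refine Finset.sum_le_sum fun σ _ => ?_
    rw [Finset.mul_sum]
    refine Finset.sum_le_sum fun τ _ => ?_
    rw [hQ, ht]
    refine nsm_point n k m hk hn2 _ (by positivity) ?_ c hc
    exact_mod_cast (Finset.card_le_univ _).trans_eq (Fintype.card_fin n)
  refine lt_of_lt_of_le ?_ hlow
  rw [← hQ, mul_pow]
  have hyn : 2 < Real.sqrt b ^ n := hN1.trans_le (pow_le_pow_right₀ hy1.le hn1)
  have hbn : Real.sqrt b ^ n * Real.sqrt b ^ n ≤ Real.cosh t ^ n := by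
    rw [← mul_pow, ← sq, hyy]
    gcongr
  have e1 : (1 + (Real.sqrt b - 1)) = Real.sqrt b := by ring
  rw [e1]
  have hfin : Real.sqrt b ^ n < Real.cosh t ^ n - 1 := by nlinarith
  have hpos : (0 : ℝ) < (2 ^ n) ^ 2 * Q ^ 2 := by positivity
  calc _ < (Real.cosh t ^ n - 1) * ((2 ^ n) ^ 2 * Q ^ 2) := by gcongr
    _ = _ := by rw [mul_pow]; ring
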